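/- There exists a constant C, depending only on the sparseness constant inf_n |γ_{n+1}|/|γ_n|, such that for every a = (a_m) ∈ ℓ²_v and every nonnegative Borel measure μ on ℂ with μ(Γ) = 0, the function f(z) = ∑_m a_m v_m/(z−γ_m) satisfies ∑_{l=1}^∞ ∫_{Ω_l} |f(z)|² dμ(z) ≤ C [ ∑_{l=1}^∞ ∫_{Ω_l} |z|^{-2} (∑_{m=1}^{l-1} |a_m| v_m)² dμ(z) + ∑_{l=1}^∞ ∫_{Ω_l} |a_l|² v_l²/|z−γ_l|² dμ(z) + ∑_{l=1}^∞ μ(Ω_l) (∑_{m=l+1}^∞ |a_m| v_m/|γ_m|)² ]. -/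

import Mathlib

open MeasureTheory Filter Topology
open scoped ENNReal NNReal

noncomputable section

/-! Sequences are indexed by `ℕ`, with the Lean index `n : ℕ` corresponding to the
paper's index `n + 1` (so `γ 0` is the paper's `γ_1`, `Omega γ 0` is the paper's `Ω_1`,
the paper's partial sum `∑_{m=1}^{n} v_m` is `∑ m ∈ Finset.range (n+1), v m`, and the
paper's tail `∑_{m=n+1}^∞ c_m` is `∑' m : ℕ, c (n+1+m)`). -/

/-- The annular shells `Ω_n` (here `Omega γ 0` is the paper's `Ω_1`). -/
def Omega (γ : ℕ → ℂ) : ℕ → Set ℂ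
  | 0 => {z : ℂ | ‖z‖ < (‖γ 0‖ + ‖γ 1‖) / 2}
  | n + 1 => {z : ℂ | (‖γ n‖ + ‖γ (n + 1)‖) / 2 ≤ ‖z‖ ∧ ‖z‖ < (‖γ (n + 1)‖ + ‖γ (n + 2)‖) / 2}

/-- The sparseness condition `inf_n |γ_{n+1}|/|γ_n| > 1`. -/
def Sparse (γ : ℕ → ℂ) : Prop := ∃ c : ℝ, 1 < c ∧ ∀ n, c * ‖γ n‖ ≤ ‖γ (n + 1)‖

/-- The admissibility condition `∑_n v_n/(1+|γ_n|²) < ∞`. -/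
def Admissible (γ : ℕ → ℂ) (v : ℕ → ℝ) : Prop :=
  Summable fun n => v n / (1 + ‖γ n‖ ^ 2)

/-- Membership in `ℓ²_v`. -/
def MemL2v (v : ℕ → ℝ) (a : ℕ → ℂ) : Prop := Summable fun n => ‖a n‖ ^ 2 * v n

/-- The squared norm `‖a‖²_v = ∑_n |a_n|² v_n`. -/
def normSqV (v : ℕ → ℝ) (a : ℕ → ℂ) : ℝ := ∑' n, ‖a n‖ ^ 2 * v n

/-- The set `(Γ,v)* = {z : ∑_n v_n/|z-γ_n|² < ∞}`. -/
def GammaStar (γ : ℕ → ℂ) (v : ℕ → ℝ) : Set ℂ :=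
  {z : ℂ | Summable fun n => v n / ‖z - γ n‖ ^ 2}

/-- The function of `𝓗(Γ,v)` with coefficient sequence `a`:
`f(z) = ∑_n a_n v_n/(z-γ_n)`. -/
def Hfun (γ : ℕ → ℂ) (v : ℕ → ℝ) (a : ℕ → ℂ) (z : ℂ) : ℂ :=
  ∑' n, a n * (v n : ℂ) / (z - γ n)

/-- `μ` is a Carleson measure for `𝓗(Γ,v)`:
`∫_ℂ |f|² dμ ≤ C ‖a‖²_v` for every `f ∈ 𝓗(Γ,v)` with coefficients `a ∈ ℓ²_v`. -/
def IsCarleson (γ : ℕ → ℂ) (v : ℕ → ℝ) (μ : Measure ℂ) : Prop :=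
  ∃ C : ℝ, 0 < C ∧ ∀ a : ℕ → ℂ, MemL2v v a →
    ∫⁻ z, (‖Hfun γ v a z‖₊ : ℝ≥0∞) ^ 2 ∂μ ≤ ENNReal.ofReal (C * normSqV v a)

/-- The sequence `(a k)` of coefficient sequences converges weakly to zero in `ℓ²_v`:
it is norm bounded and `∑_n a^{(k)}_n v_n conj(b_n) → 0` for every `b ∈ ℓ²_v`. -/
def WeaklyNull (v : ℕ → ℝ) (a : ℕ → ℕ → ℂ) : Prop :=
  (∃ M : ℝ, ∀ k, normSqV v (a k) ≤ M) ∧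
    ∀ b : ℕ → ℂ, MemL2v v b →
      Tendsto (fun k => ∑' n, a k n * (v n : ℂ) * (starRingEnd ℂ) (b n)) atTop (𝓝 0)

/-- `μ` is a compact (vanishing) Carleson measure for `𝓗(Γ,v)`: it is Carleson and
`∫_ℂ |f_k|² dμ → 0` for every weakly null sequence in `𝓗(Γ,v)`. -/
def IsCompactCarleson (γ : ℕ → ℂ) (v : ℕ → ℝ) (μ : Measure ℂ) : Prop :=
  IsCarleson γ v μ ∧
    ∀ a : ℕ → ℕ → ℂ, (∀ k, MemL2v v (a k)) → WeaklyNull v a →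
      Tendsto (fun k => ∫⁻ z, (‖Hfun γ v (a k) z‖₊ : ℝ≥0∞) ^ 2 ∂μ) atTop (𝓝 0)

/-- The local quantity `∫_{Ω_n} v_n/|z-γ_n|² dμ(z)`. -/
def localTerm (γ : ℕ → ℂ) (v : ℕ → ℝ) (μ : Measure ℂ) (n : ℕ) : ℝ≥0∞ :=
  ∫⁻ z in Omega γ n, ENNReal.ofReal (v n / ‖z - γ n‖ ^ 2) ∂μ

/-- The global quantity
`(∑_{m=1}^n v_m)·(∑_{m=n+1}^∞ ∫_{Ω_m} |z|⁻² dμ) + (∑_{m=n+1}^∞ v_m/|γ_m|²)·(∑_{m=1}^n μ(Ω_m))`. -/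
def globalTerm (γ : ℕ → ℂ) (v : ℕ → ℝ) (μ : Measure ℂ) (n : ℕ) : ℝ≥0∞ :=
  ENNReal.ofReal (∑ m ∈ Finset.range (n + 1), v m) *
      (∑' m : ℕ, ∫⁻ z in Omega γ (n + 1 + m), ENNReal.ofReal (1 / ‖z‖ ^ 2) ∂μ) +
    ENNReal.ofReal (∑' m : ℕ, v (n + 1 + m) / ‖γ (n + 1 + m)‖ ^ 2) *
      (∑ m ∈ Finset.range (n + 1), μ (Omega γ m))

/-! If `δ r ≤ R`, the midpoint of `[r, R]` is at least `(1+δ)/2 · r` and at most `R/c`, where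
`c = 2δ/(1+δ)`, and `1 < c ≤ (1+δ)/2`. So for `z ∈ Ω_l` the moduli `|z|` and `|γ_m|`, `m ≠ l`,
differ by a factor of at least `c`, and `max(|z|, |γ_m|) ≤ c/(c-1) · |z - γ_m|`, with
`c/(c-1) = 2δ/(δ-1)`. Splitting the series at `m = l` therefore bounds `|f|` on `Ω_l` by three sums;
Cauchy–Schwarz gives the square, and one integrates over each shell. All of this takes place in
`[0, ∞]`, where no convergence question arises; one returns to real integrands because
`∑ |a_m| v_m / |γ_m|` is finite, again by Cauchy–Schwarz, and `μ` does not charge the poles. -/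

theorem norm_le_mul_norm_sub_of_mul_norm_le {E : Type*} [SeminormedAddCommGroup E]
    {c : ℝ} (hc : 1 < c) {x y : E} (h : c * ‖x‖ ≤ ‖y‖) : ‖y‖ ≤ c / (c - 1) * ‖y - x‖ := by
  have htriangle : ‖y‖ - ‖x‖ ≤ ‖y - x‖ := norm_sub_norm_le y x
  rw [div_mul_eq_mul_div, le_div_iff₀ (by linarith)]
  nlinarith

theorem add_add_sq_le_three_mul (x y z : ℝ≥0∞) :
    (x + y + z) ^ 2 ≤ 3 * (x ^ 2 + y ^ 2 + z ^ 2) := by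
  have h := ENNReal.rpow_sum_le_const_mul_sum_rpow Finset.univ ![x, y, z] one_le_two
  norm_num [Fin.sum_univ_three] at h
  exact h

section CauchySeries

variable {𝕜 : Type*} [NormedField 𝕜] {c : ℝ}

theorem enorm_div_le_enorm_div_enorm (x y : 𝕜) : ‖x / y‖ₑ ≤ ‖x‖ₑ / ‖y‖ₑ := by
  rcases eq_or_ne y 0 with rfl | hy
  · simp
  · rw [div_eq_mul_inv, enorm_mul, enorm_inv hy, ← div_eq_mul_inv]

theorem enorm_div_sub_le (hc : 1 < c) {x y : 𝕜} (h : c * ‖x‖ ≤ ‖y‖) (b : 𝕜) :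
    ‖b / (y - x)‖ₑ ≤ ENNReal.ofReal (c / (c - 1)) * (‖b‖ₑ / ‖y‖ₑ) := by
  have hK : 0 < c / (c - 1) := div_pos (by linarith) (by linarith)
  have hsub : ‖y‖ₑ ≤ ENNReal.ofReal (c / (c - 1)) * ‖y - x‖ₑ := by
    rw [← ofReal_norm, ← ofReal_norm, ← ENNReal.ofReal_mul hK.le]
    exact ENNReal.ofReal_le_ofReal (norm_le_mul_norm_sub_of_mul_norm_le hc h)
  calc ‖b / (y - x)‖ₑ ≤ ‖b‖ₑ / ‖y - x‖ₑ := enorm_div_le_enorm_div_enorm b (y - x)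
    _ = ENNReal.ofReal (c / (c - 1)) * ‖b‖ₑ / (ENNReal.ofReal (c / (c - 1)) * ‖y - x‖ₑ) :=
      (ENNReal.mul_div_mul_left _ _ (ENNReal.ofReal_pos.2 hK).ne' ENNReal.ofReal_ne_top).symm
    _ ≤ ENNReal.ofReal (c / (c - 1)) * ‖b‖ₑ / ‖y‖ₑ := by gcongr
    _ = ENNReal.ofReal (c / (c - 1)) * (‖b‖ₑ / ‖y‖ₑ) := mul_div_assoc _ _ _

theorem enorm_tsum_le_sum_range_add_add_tsum {ε : Type*} [TopologicalSpace ε]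
    [ESeminormedAddCommMonoid ε] (f : ℕ → ε) (l : ℕ) :
    ‖∑' m, f m‖ₑ ≤ ∑ m ∈ Finset.range l, ‖f m‖ₑ + ‖f l‖ₑ + ∑' k, ‖f (l + 1 + k)‖ₑ :=
  calc ‖∑' m, f m‖ₑ ≤ ∑' m, ‖f m‖ₑ := enorm_tsum_le_tsum_enorm
    _ = ∑ m ∈ Finset.range (l + 1), ‖f m‖ₑ + ∑' k, ‖f (k + (l + 1))‖ₑ :=
      (ENNReal.summable.sum_add_tsum_nat_add').symm
    _ = ∑ m ∈ Finset.range l, ‖f m‖ₑ + ‖f l‖ₑ + ∑' k, ‖f (l + 1 + k)‖ₑ := by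
      simp only [Finset.sum_range_succ, add_comm _ (l + 1)]

variable {γ : ℕ → 𝕜} {z : 𝕜} {l : ℕ}

theorem enorm_tsum_div_sub_le (hc : 1 < c) (hhead : ∀ m < l, c * ‖γ m‖ ≤ ‖z‖)
    (htail : ∀ m > l, c * ‖z‖ ≤ ‖γ m‖) (b : ℕ → 𝕜) :
    ‖∑' m, b m / (z - γ m)‖ₑ ≤
      ENNReal.ofReal (c / (c - 1)) * ((∑ m ∈ Finset.range l, ‖b m‖ₑ) / ‖z‖ₑ) +
        ‖b l‖ₑ / ‖z - γ l‖ₑ +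
        ENNReal.ofReal (c / (c - 1)) * ∑' k, ‖b (l + 1 + k)‖ₑ / ‖γ (l + 1 + k)‖ₑ := by
  refine (enorm_tsum_le_sum_range_add_add_tsum _ l).trans (add_le_add (add_le_add ?_ ?_) ?_)
  · rw [ENNReal.div_eq_inv_mul, Finset.mul_sum, Finset.mul_sum]
    simp only [← ENNReal.div_eq_inv_mul]
    exact Finset.sum_le_sum fun m hm => enorm_div_sub_le hc (hhead m (Finset.mem_range.1 hm)) _
  · exact enorm_div_le_enorm_div_enorm _ _
  · rw [← ENNReal.tsum_mul_left]
    refine ENNReal.tsum_le_tsum fun k => ?_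
    rw [← neg_sub, div_neg, enorm_neg]
    exact enorm_div_sub_le hc (htail _ (by omega)) _

theorem enorm_tsum_div_sub_sq_le (hc : 1 < c) (hhead : ∀ m < l, c * ‖γ m‖ ≤ ‖z‖)
    (htail : ∀ m > l, c * ‖z‖ ≤ ‖γ m‖) (b : ℕ → 𝕜) :
    ‖∑' m, b m / (z - γ m)‖ₑ ^ 2 ≤ ENNReal.ofReal (3 * (c / (c - 1)) ^ 2) *
      (((∑ m ∈ Finset.range l, ‖b m‖ₑ) / ‖z‖ₑ) ^ 2 + (‖b l‖ₑ / ‖z - γ l‖ₑ) ^ 2 +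
        (∑' k, ‖b (l + 1 + k)‖ₑ / ‖γ (l + 1 + k)‖ₑ) ^ 2) := by
  have hK : 1 ≤ c / (c - 1) := by rw [le_div_iff₀ (by linarith)]; linarith
  rw [ENNReal.ofReal_mul (by norm_num), ENNReal.ofReal_pow (by linarith),
    ENNReal.ofReal_ofNat]
  have hone : 1 ≤ ENNReal.ofReal (c / (c - 1)) := ENNReal.one_le_ofReal.2 hK
  have hsplit := enorm_tsum_div_sub_le hc hhead htail b
  generalize ENNReal.ofReal (c / (c - 1)) = K at *
  generalize (∑ m ∈ Finset.range l, ‖b m‖ₑ) / ‖z‖ₑ = X at *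
  generalize ‖b l‖ₑ / ‖z - γ l‖ₑ = Y at *
  generalize ∑' k, ‖b (l + 1 + k)‖ₑ / ‖γ (l + 1 + k)‖ₑ = T at *
  calc ‖∑' m, b m / (z - γ m)‖ₑ ^ 2 ≤ (K * X + K * Y + K * T) ^ 2 := by
        gcongr
        refine hsplit.trans ?_
        gcongr
        exact le_mul_of_one_le_left' hone
    _ = K ^ 2 * (X + Y + T) ^ 2 := by ring
    _ ≤ K ^ 2 * (3 * (X ^ 2 + Y ^ 2 + T ^ 2)) := by gcongr; exact add_add_sq_le_three_mul X Y T
    _ = 3 * K ^ 2 * (X ^ 2 + Y ^ 2 + T ^ 2) := by ring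

end CauchySeries

theorem measurableSet_Omega (γ : ℕ → ℂ) (l : ℕ) : MeasurableSet (Omega γ l) := by
  cases l with
  | zero => exact measurableSet_lt measurable_norm measurable_const
  | succ n =>
    exact (measurableSet_le measurable_const measurable_norm).inter
      (measurableSet_lt measurable_norm measurable_const)

theorem norm_lt_of_mem_Omega {γ : ℕ → ℂ} {l : ℕ} {z : ℂ} (hz : z ∈ Omega γ l) :
    ‖z‖ < (‖γ l‖ + ‖γ (l + 1)‖) / 2 := by
  cases l with
  | zero => exact hz
  | succ n => exact hz.2

theorem ne_zero_of_mem_Omega_succ {γ : ℕ → ℂ} {n : ℕ} (hγ : γ n ≠ 0) {z : ℂ}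
    (hz : z ∈ Omega γ (n + 1)) : z ≠ 0 := by
  have hpos : 0 < ‖γ n‖ := norm_pos_iff.2 hγ
  have hlower : (‖γ n‖ + ‖γ (n + 1)‖) / 2 ≤ ‖z‖ := hz.1
  exact norm_pos_iff.1 (by linarith [norm_nonneg (γ (n + 1))])

section Sparse

variable {γ : ℕ → ℂ} {δ : ℝ}

theorem monotone_norm_of_mul_norm_le_succ (hδ : 1 ≤ δ) (hs : ∀ n, δ * ‖γ n‖ ≤ ‖γ (n + 1)‖) :
    Monotone fun n => ‖γ n‖ :=
  monotone_nat_of_le_succ fun n => (le_mul_of_one_le_left (norm_nonneg _) hδ).trans (hs n)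

theorem mul_norm_le_norm_of_mem_Omega_of_lt (hδ : 1 ≤ δ) (hs : ∀ n, δ * ‖γ n‖ ≤ ‖γ (n + 1)‖)
    {l m : ℕ} (hml : m < l) {z : ℂ} (hz : z ∈ Omega γ l) :
    2 * δ / (1 + δ) * ‖γ m‖ ≤ ‖z‖ := by
  obtain ⟨n, rfl⟩ : ∃ n, l = n + 1 := Nat.exists_eq_add_one.2 (by omega)
  have hmn : ‖γ m‖ ≤ ‖γ n‖ := monotone_norm_of_mul_norm_le_succ hδ hs (by omega)
  have hratio : 2 * δ / (1 + δ) ≤ (1 + δ) / 2 := by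
    rw [div_le_div_iff₀ (by linarith) two_pos]
    nlinarith [sq_nonneg (δ - 1)]
  calc 2 * δ / (1 + δ) * ‖γ m‖ ≤ (1 + δ) / 2 * ‖γ n‖ := by gcongr
    _ = (‖γ n‖ + δ * ‖γ n‖) / 2 := by ring
    _ ≤ (‖γ n‖ + ‖γ (n + 1)‖) / 2 := by gcongr; exact hs n
    _ ≤ ‖z‖ := hz.1

theorem mul_norm_le_norm_of_mem_Omega_of_gt (hδ : 1 ≤ δ) (hs : ∀ n, δ * ‖γ n‖ ≤ ‖γ (n + 1)‖)
    {l m : ℕ} (hlm : l < m) {z : ℂ} (hz : z ∈ Omega γ l) :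
    2 * δ / (1 + δ) * ‖z‖ ≤ ‖γ m‖ := by
  refine le_trans ?_ (monotone_norm_of_mul_norm_le_succ hδ hs (Nat.succ_le_of_lt hlm))
  have hz' := norm_lt_of_mem_Omega hz
  rw [div_mul_eq_mul_div, div_le_iff₀ (by linarith)]
  nlinarith [hs l]

theorem enorm_tsum_div_sub_sq_le_of_mem_Omega (hδ : 1 < δ)
    (hs : ∀ n, δ * ‖γ n‖ ≤ ‖γ (n + 1)‖) (b : ℕ → ℂ) {l : ℕ} {z : ℂ} (hz : z ∈ Omega γ l) :
    ‖∑' m, b m / (z - γ m)‖ₑ ^ 2 ≤ ENNReal.ofReal (3 * (2 * δ / (δ - 1)) ^ 2) *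
      (((∑ m ∈ Finset.range l, ‖b m‖ₑ) / ‖z‖ₑ) ^ 2 + (‖b l‖ₑ / ‖z - γ l‖ₑ) ^ 2 +
        (∑' k, ‖b (l + 1 + k)‖ₑ / ‖γ (l + 1 + k)‖ₑ) ^ 2) := by
  have hc : 1 < 2 * δ / (1 + δ) := by rw [lt_div_iff₀ (by linarith)]; linarith
  have hconst : 2 * δ / (δ - 1) = 2 * δ / (1 + δ) / (2 * δ / (1 + δ) - 1) := by
    have : δ - 1 ≠ 0 := by linarith
    have : 1 + δ ≠ 0 := by linarith
    rw [div_sub_one this, div_div_div_cancel_right₀ this]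
    ring
  rw [hconst]
  exact enorm_tsum_div_sub_sq_le hc
    (fun _ hml => mul_norm_le_norm_of_mem_Omega_of_lt hδ.le hs hml hz)
    (fun _ hlm => mul_norm_le_norm_of_mem_Omega_of_gt hδ.le hs hlm hz) b

-- If the series diverges on `Ω_l`, its junk value `0` is harmless: the `l`-th tail sum is infinite.
theorem splitting_estimate_general (hδ : 1 < δ) (hs : ∀ n, δ * ‖γ n‖ ≤ ‖γ (n + 1)‖) (b : ℕ → ℂ)
    (μ : Measure ℂ) :
    ∑' l, ∫⁻ z in Omega γ l, ‖∑' m, b m / (z - γ m)‖ₑ ^ 2 ∂μ ≤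
      ENNReal.ofReal (3 * (2 * δ / (δ - 1)) ^ 2) *
        ((∑' l, ∫⁻ z in Omega γ l, ((∑ m ∈ Finset.range l, ‖b m‖ₑ) / ‖z‖ₑ) ^ 2 ∂μ) +
          (∑' l, ∫⁻ z in Omega γ l, (‖b l‖ₑ / ‖z - γ l‖ₑ) ^ 2 ∂μ) +
          (∑' l, μ (Omega γ l) * (∑' k, ‖b (l + 1 + k)‖ₑ / ‖γ (l + 1 + k)‖ₑ) ^ 2)) := by
  rw [← ENNReal.tsum_add, ← ENNReal.tsum_add, ← ENNReal.tsum_mul_left]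
  refine ENNReal.tsum_le_tsum fun l => ?_
  refine (setLIntegral_mono' (measurableSet_Omega γ l) fun z hz =>
    enorm_tsum_div_sub_sq_le_of_mem_Omega hδ hs b hz).trans_eq ?_
  rw [lintegral_const_mul _ (by fun_prop), lintegral_add_left (by fun_prop),
    lintegral_add_left (by fun_prop), setLIntegral_const, mul_comm (_ ^ 2) (μ _)]

end Sparse

section RealForm

theorem ofReal_div_enorm_sq {E : Type*} [NormedAddCommGroup E] {s : ℝ} (hs : 0 ≤ s) {z : E}
    (hz : z ≠ 0) :
    (ENNReal.ofReal s / ‖z‖ₑ) ^ 2 = ENNReal.ofReal (s ^ 2 / ‖z‖ ^ 2) := by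
  rw [← ofReal_norm, ← ENNReal.ofReal_div_of_pos (norm_pos_iff.2 hz),
    ← ENNReal.ofReal_pow (by positivity), div_pow]

-- At `z = w` the left-hand integrand is infinite when `x ≠ 0`, while the right-hand one is `0`.
theorem setLIntegral_enorm_div_enorm_sub_sq {E F : Type*} [NormedAddCommGroup E]
    [MeasurableSpace E] [SeminormedAddCommGroup F] {μ : Measure E} {w : E} (hw : μ {w} = 0) (x : F)
    (s : Set E) :
    ∫⁻ z in s, (‖x‖ₑ / ‖z - w‖ₑ) ^ 2 ∂μ =
      ∫⁻ z in s, ENNReal.ofReal (‖x‖ ^ 2 / ‖z - w‖ ^ 2) ∂μ := by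
  refine lintegral_congr_ae (ae_restrict_of_ae ?_)
  filter_upwards [measure_eq_zero_iff_ae_notMem.1 hw] with z hz
  rw [← ofReal_div_enorm_sq (norm_nonneg x) (sub_ne_zero.2 hz), ofReal_norm]

variable {γ b : ℕ → ℂ}

theorem setLIntegral_sum_range_div_enorm_sq {μ : Measure ℂ} (hγ : ∀ n, γ n ≠ 0) (l : ℕ) :
    ∫⁻ z in Omega γ l, ((∑ m ∈ Finset.range l, ‖b m‖ₑ) / ‖z‖ₑ) ^ 2 ∂μ =
      ∫⁻ z in Omega γ l,
        ENNReal.ofReal ((∑ m ∈ Finset.range l, ‖b m‖) ^ 2 / ‖z‖ ^ 2) ∂μ := by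
  cases l with
  | zero => simp
  | succ n =>
    refine setLIntegral_congr_fun (measurableSet_Omega γ _) fun z hz => ?_
    simp only [← ofReal_div_enorm_sq (Finset.sum_nonneg fun m _ => norm_nonneg (b m))
      (ne_zero_of_mem_Omega_succ (hγ n) hz),
      ENNReal.ofReal_sum_of_nonneg fun m _ => norm_nonneg (b m), ofReal_norm]

theorem tsum_enorm_div_enorm_sq (hγ : ∀ n, γ n ≠ 0) (hb : Summable fun n => ‖b n‖ / ‖γ n‖)
    (l : ℕ) :
    (∑' k, ‖b (l + 1 + k)‖ₑ / ‖γ (l + 1 + k)‖ₑ) ^ 2 =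
      ENNReal.ofReal ((∑' k, ‖b (l + 1 + k)‖ / ‖γ (l + 1 + k)‖) ^ 2) := by
  have htail : Summable fun k => ‖b (l + 1 + k)‖ / ‖γ (l + 1 + k)‖ :=
    hb.comp_injective (add_right_injective (l + 1))
  rw [ENNReal.ofReal_pow (tsum_nonneg fun k => by positivity),
    ENNReal.ofReal_tsum_of_nonneg (fun k => by positivity) htail]
  simp only [ENNReal.ofReal_div_of_pos (norm_pos_iff.2 (hγ _)), ofReal_norm]

end RealForm

theorem summable_mul_mul_of_summable_sq_mul {ι : Type*} {x y v : ι → ℝ} (hv : ∀ i, 0 ≤ v i)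
    (hx : Summable fun i => x i ^ 2 * v i) (hy : Summable fun i => y i ^ 2 * v i) :
    Summable fun i => x i * y i * v i := by
  refine Summable.of_norm_bounded (hx.add hy) fun i => ?_
  have hamgm : |x i * y i| ≤ x i ^ 2 + y i ^ 2 := by
    rw [abs_mul, ← sq_abs (x i), ← sq_abs (y i)]
    nlinarith [two_mul_le_add_sq |x i| |y i|, mul_nonneg (abs_nonneg (x i)) (abs_nonneg (y i))]
  rw [Real.norm_eq_abs, abs_mul, abs_of_nonneg (hv i), ← add_mul]
  exact mul_le_mul_of_nonneg_right hamgm (hv i)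

theorem Admissible.summable_div_norm_sq {γ : ℕ → ℂ} {v : ℕ → ℝ} (hA : Admissible γ v)
    (hv : ∀ n, 0 ≤ v n) {r : ℝ} (hr : 0 < r) (hγ : ∀ n, r ≤ ‖γ n‖) :
    Summable fun n => v n / ‖γ n‖ ^ 2 := by
  refine Summable.of_nonneg_of_le (fun n => div_nonneg (hv n) (sq_nonneg _)) (fun n => ?_)
    (hA.mul_left (1 + 1 / r ^ 2))
  have hpos : 0 < ‖γ n‖ := hr.trans_le (hγ n)
  calc v n / ‖γ n‖ ^ 2 = (1 + 1 / ‖γ n‖ ^ 2) * (v n / (1 + ‖γ n‖ ^ 2)) := by field_simp; ring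
    _ ≤ (1 + 1 / r ^ 2) * (v n / (1 + ‖γ n‖ ^ 2)) := by
      have := hv n
      gcongr
      exact hγ n

theorem MemL2v.summable_norm_mul_div_norm {γ : ℕ → ℂ} {v : ℕ → ℝ} {a : ℕ → ℂ}
    (ha : MemL2v v a) (hA : Admissible γ v) (hv : ∀ n, 0 ≤ v n) {r : ℝ} (hr : 0 < r)
    (hγ : ∀ n, r ≤ ‖γ n‖) : Summable fun n => ‖a n‖ * v n / ‖γ n‖ := by
  have hinv : Summable fun n => ‖γ n‖⁻¹ ^ 2 * v n := by
    simpa only [div_eq_inv_mul, inv_pow] using hA.summable_div_norm_sq hv hr hγ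
  simpa only [mul_right_comm, div_eq_mul_inv] using summable_mul_mul_of_summable_sq_mul hv ha hinv

/-- The basic splitting estimate: there is a constant `C` depending only on the
sparseness constant `δ` such that for every `a ∈ ℓ²_v`, every admissible weight and
every measure `μ` with `μ(Γ) = 0`, the function `f(z) = ∑_m a_m v_m/(z-γ_m)` satisfies
`∑_l ∫_{Ω_l}|f|²dμ ≤ C (∑_l ∫_{Ω_l}|z|⁻²(∑_{m<l}|a_m|v_m)² dμ
+ ∑_l ∫_{Ω_l}|a_l|²v_l²/|z-γ_l|² dμ + ∑_l μ(Ω_l)(∑_{m>l}|a_m|v_m/|γ_m|)²)`. -/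
theorem splitting_estimate (δ : ℝ) (hδ : 1 < δ) :
    ∃ C : ℝ, 0 < C ∧
      ∀ (γ : ℕ → ℂ) (v : ℕ → ℝ) (μ : Measure ℂ) (a : ℕ → ℂ),
        Function.Injective γ → (∀ n, γ n ≠ 0) → (Monotone fun n => ‖γ n‖) →
        (∀ n, δ * ‖γ n‖ ≤ ‖γ (n + 1)‖) → (∀ n, 0 < v n) → Admissible γ v →
        μ (Set.range γ) = 0 → MemL2v v a →
        (∑' l, ∫⁻ z in Omega γ l, (‖Hfun γ v a z‖₊ : ℝ≥0∞) ^ 2 ∂μ) ≤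
          ENNReal.ofReal C *
            ((∑' l, ∫⁻ z in Omega γ l,
                ENNReal.ofReal ((∑ m ∈ Finset.range l, ‖a m‖ * v m) ^ 2 / ‖z‖ ^ 2) ∂μ) +
              (∑' l, ∫⁻ z in Omega γ l,
                ENNReal.ofReal (‖a l‖ ^ 2 * v l ^ 2 / ‖z - γ l‖ ^ 2) ∂μ) +
              (∑' l, μ (Omega γ l) *
                ENNReal.ofReal
                  ((∑' k, ‖a (l + 1 + k)‖ * v (l + 1 + k) / ‖γ (l + 1 + k)‖) ^ 2))) := by
  have : 0 < δ - 1 := sub_pos.2 hδ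
  refine ⟨3 * (2 * δ / (δ - 1)) ^ 2, by positivity, fun γ v μ a _ hγ hmono hs hv hA hμ ha => ?_⟩
  have hnorm (n : ℕ) : ‖a n * (v n : ℂ)‖ = ‖a n‖ * v n := by
    rw [norm_mul, Complex.norm_of_nonneg (hv n).le]
  have hb : Summable fun n => ‖a n * (v n : ℂ)‖ / ‖γ n‖ := by
    simpa only [hnorm] using ha.summable_norm_mul_div_norm hA (fun n => (hv n).le)
      (norm_pos_iff.2 (hγ 0)) (fun n => hmono n.zero_le)
  have hpoint (n : ℕ) : μ {γ n} = 0 :=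
    measure_mono_null (Set.singleton_subset_iff.2 (Set.mem_range_self n)) hμ
  simpa only [setLIntegral_sum_range_div_enorm_sq hγ,
    setLIntegral_enorm_div_enorm_sub_sq (hpoint _), tsum_enorm_div_enorm_sq hγ hb, hnorm, mul_pow,
    Hfun, ← enorm_eq_nnnorm] using
    splitting_estimate_general hδ hs (fun n => a n * (v n : ℂ)) μ
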